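/- Let N ≥ 1, n ≥ 2, and let f = (f₁,…,f_{N+1}) ∈ ℝ^{N+1} with f₁ = 1 and f_j = 1 + (−1)^j for j = 2,…,N+1 (i.e. f = (1,2,0,2,0,…), the vector arising from the modified Legendre basis, whose entries f_{i+1} = ∫₀¹ (d/dτ)[P_i(2τ−1)] dτ = 1 + (−1)^{i+1} for i ≥ 1... specifically f_j = 1+(−1)^j for j ≥ 2). Then |f|² = 2N+1 if N is even and |f|² = 2N+3 if N is odd, and consequently, with C_s ∈ ℝ^{(n−1)×n(N+1)} the block bidiagonal matrix whose j-th row carries f in columns (j−1)(N+1)+1,…,j(N+1) and −1 in column j(N+1)+1, every eigenvalue λ of C_sC_sᵀ satisfies 2N ≤ λ ≤ 2N+6. -/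

import Mathlib

open Matrix
open scoped BigOperators

/-- The constraint matrix `C_s`: row `j` (for `j = 1,…,n-1`) carries the vector `f` in the
`j`-th block of `N+1` columns and the entry `-1` in the first column of block `j+1`.
Columns are indexed by pairs `(block, position in block)`. -/
def Cs (N n : ℕ) (f : Fin (N + 1) → ℝ) :
    Matrix (Fin (n - 1)) (Fin n × Fin (N + 1)) ℝ :=
  Matrix.of fun j q =>
    if (q.1 : ℕ) = (j : ℕ) then f q.2
    else if (q.1 : ℕ) = (j : ℕ) + 1 ∧ q.2 = 0 then -1 else 0

/-! Consecutive rows of `C_s` overlap only in the first column of a block, so `C_s C_sᵀ` is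
tridiagonal with constant diagonal `|f|² + 1` and constant off-diagonal `-f₁`. Each row has at most
two off-diagonal entries, and Gershgorin's theorem puts every eigenvalue within `2 |f₁|` of
`|f|² + 1`. The identity `(1 + (-1)^i)² = 2 (1 + (-1)^i)` reduces `|f|²` to an alternating
sum. -/

/-- The symmetric tridiagonal Toeplitz matrix of size `m`, with `d` on the diagonal and `e` on the
two neighbouring diagonals. It is the form taken by `C_s C_sᵀ`. -/
def tridiagonalToeplitz {R : Type*} [Zero R] (m : ℕ) (d e : R) : Matrix (Fin m) (Fin m) R :=
  Matrix.of fun i j =>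
    if i = j then d else if (j : ℕ) = i + 1 ∨ (i : ℕ) = j + 1 then e else 0

theorem card_filter_val_adjacent_le_two {m : ℕ} (i : Fin m) :
    (Finset.univ.filter fun j : Fin m => (j : ℕ) = i + 1 ∨ (i : ℕ) = j + 1).card ≤ 2 := by
  have h_maps : ∀ j ∈ Finset.univ.filter fun j : Fin m => (j : ℕ) = i + 1 ∨ (i : ℕ) = j + 1,
      (j : ℕ) ∈ ({(i : ℕ) + 1, (i : ℕ) - 1} : Finset ℕ) := by
    simp only [Finset.mem_filter_univ, Finset.mem_insert, Finset.mem_singleton]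
    omega
  exact (Finset.card_le_card_of_injOn _ h_maps Fin.val_injective.injOn).trans Finset.card_le_two

theorem sum_norm_offDiag_tridiagonalToeplitz_le {E : Type*} [SeminormedAddGroup E] {m : ℕ}
    (d e : E) (i : Fin m) :
    ∑ j ∈ Finset.univ.erase i, ‖tridiagonalToeplitz m d e i j‖ ≤ 2 * ‖e‖ := by
  calc ∑ j ∈ Finset.univ.erase i, ‖tridiagonalToeplitz m d e i j‖
      = ∑ j ∈ Finset.univ.erase i,
          if (j : ℕ) = i + 1 ∨ (i : ℕ) = j + 1 then ‖e‖ else 0 := by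
        refine Finset.sum_congr rfl fun j hj => ?_
        rw [tridiagonalToeplitz, of_apply, if_neg (Finset.ne_of_mem_erase hj).symm,
          apply_ite norm, norm_zero]
    _ ≤ ∑ j : Fin m, if (j : ℕ) = i + 1 ∨ (i : ℕ) = j + 1 then ‖e‖ else 0 :=
        Finset.sum_le_univ_sum_of_nonneg fun j => by positivity
    _ = (Finset.univ.filter fun j : Fin m => (j : ℕ) = i + 1 ∨ (i : ℕ) = j + 1).card * ‖e‖ := by
        rw [← Finset.sum_filter, Finset.sum_const, nsmul_eq_mul]
    _ ≤ 2 * ‖e‖ := by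
        gcongr
        exact_mod_cast card_filter_val_adjacent_le_two i

theorem norm_sub_le_of_hasEigenvalue_tridiagonalToeplitz {K : Type*} [NormedField K] {m : ℕ}
    {d e μ : K} (hμ : Module.End.HasEigenvalue (toLin' (tridiagonalToeplitz m d e)) μ) :
    ‖μ - d‖ ≤ 2 * ‖e‖ := by
  obtain ⟨i, hi⟩ := eigenvalue_mem_ball hμ
  have h_diag : tridiagonalToeplitz m d e i i = d := if_pos rfl
  rw [mem_closedBall_iff_norm, h_diag] at hi
  exact hi.trans (sum_norm_offDiag_tridiagonalToeplitz_le d e i)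

theorem sum_ite_val_eq_mul_ite_val_eq {R : Type*} [NonAssocSemiring R] {n k : ℕ}
    (hk : k < n) (l : ℕ) :
    ∑ b : Fin n, (if (b : ℕ) = k then (1 : R) else 0) * (if (b : ℕ) = l then 1 else 0) =
      if k = l then 1 else 0 := by
  rw [Fintype.sum_eq_single ⟨k, hk⟩ fun b hb => by simp [Fin.ext_iff.not.mp hb]]
  simp

section Gram

variable (N n : ℕ) (f : Fin (N + 1) → ℝ)

theorem Cs_apply_block (i : Fin (n - 1)) (b : Fin n) :
    (fun p => Cs N n f i (b, p)) =
      (if (b : ℕ) = i then (1 : ℝ) else 0) • f -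
        (if (b : ℕ) = i + 1 then (1 : ℝ) else 0) • Pi.single 0 1 := by
  ext p
  simp only [Cs, of_apply, Pi.sub_apply, Pi.smul_apply, Pi.single_apply, smul_eq_mul]
  grind

theorem Cs_mul_transpose :
    Cs N n f * (Cs N n f)ᵀ = tridiagonalToeplitz (n - 1) (f ⬝ᵥ f + 1) (-f 0) := by
  ext i j
  let δ (k : ℕ) (b : Fin n) : ℝ := if (b : ℕ) = k then 1 else 0
  have h_block (b : Fin n) :
      (fun p => Cs N n f i (b, p)) ⬝ᵥ (fun p => Cs N n f j (b, p)) =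
        δ i b * δ j b * (f ⬝ᵥ f) - (δ i b * δ (j + 1) b + δ (i + 1) b * δ j b) * f 0 +
          δ (i + 1) b * δ (j + 1) b := by
    simp only [Cs_apply_block, sub_dotProduct, dotProduct_sub, smul_dotProduct, dotProduct_smul,
      single_dotProduct, dotProduct_single, Pi.sub_apply, Pi.smul_apply, Pi.single_eq_same,
      smul_eq_mul, δ]
    ring
  have h_sum {k : ℕ} (hk : k < n) (l : ℕ) : ∑ b, δ k b * δ l b = if k = l then 1 else 0 :=
    sum_ite_val_eq_mul_ite_val_eq hk l
  have hi : (i : ℕ) + 1 < n := by omega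
  calc (Cs N n f * (Cs N n f)ᵀ) i j
      = ∑ b, (fun p => Cs N n f i (b, p)) ⬝ᵥ (fun p => Cs N n f j (b, p)) :=
        Fintype.sum_prod_type _
    _ = (if (i : ℕ) = j then 1 else 0) * (f ⬝ᵥ f) -
          ((if (i : ℕ) = j + 1 then 1 else 0) + if (i : ℕ) + 1 = j then 1 else 0) * f 0 +
          if (i : ℕ) + 1 = j + 1 then 1 else 0 := by
        simp only [h_block, Finset.sum_add_distrib, Finset.sum_sub_distrib, ← Finset.sum_mul,
          h_sum hi, h_sum (Nat.lt_of_succ_lt hi)]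
    _ = tridiagonalToeplitz (n - 1) (f ⬝ᵥ f + 1) (-f 0) i j := by
        rw [tridiagonalToeplitz, of_apply]
        grind

variable {N n f}

theorem abs_sub_le_of_Cs_mul_transpose_mulVec_eq_smul {μ : ℝ} {v : Fin (n - 1) → ℝ} (hv : v ≠ 0)
    (h_eig : (Cs N n f * (Cs N n f)ᵀ) *ᵥ v = μ • v) :
    |μ - (f ⬝ᵥ f + 1)| ≤ 2 * |f 0| := by
  rw [Cs_mul_transpose] at h_eig
  have hμ : Module.End.HasEigenvalue
      (toLin' (tridiagonalToeplitz (n - 1) (f ⬝ᵥ f + 1) (-f 0))) μ :=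
    Module.End.hasEigenvalue_of_hasEigenvector
      ⟨Module.End.mem_eigenspace_iff.mpr (by rwa [toLin'_apply]), hv⟩
  simpa only [Real.norm_eq_abs, abs_neg] using norm_sub_le_of_hasEigenvalue_tridiagonalToeplitz hμ

end Gram

theorem sum_range_sq_one_add_neg_one_pow {R : Type*} [CommRing R] (n : ℕ) :
    ∑ i ∈ Finset.range n, (1 + (-1 : R) ^ i) ^ 2 = if Even n then 2 * (n : R) else 2 * n + 2 := by
  have h_sq (i : ℕ) : (1 + (-1 : R) ^ i) ^ 2 = 2 * (1 + (-1) ^ i) := by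
    have : ((-1 : R) ^ i) ^ 2 = 1 := by rw [← pow_mul', Even.neg_one_pow (even_two_mul i)]
    linear_combination this
  calc ∑ i ∈ Finset.range n, (1 + (-1 : R) ^ i) ^ 2
      = 2 * (n + ∑ i ∈ Finset.range n, (-1 : R) ^ i) := by
        simp only [h_sq, ← Finset.mul_sum, Finset.sum_add_distrib, Finset.sum_const,
          Finset.card_range, nsmul_one]
    _ = if Even n then 2 * (n : R) else 2 * n + 2 := by
        rw [neg_one_geom_sum]
        split_ifs <;> ring

theorem sum_sq_of_eq_one_add_neg_one_pow {R : Type*} [CommRing R] {N : ℕ} {f : Fin (N + 1) → R}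
    (hf0 : f 0 = 1) (hf : ∀ l : Fin (N + 1), l ≠ 0 → f l = 1 + (-1) ^ ((l : ℕ) + 1)) :
    ∑ l, f l ^ 2 = if Even N then 2 * (N : R) + 1 else 2 * N + 3 := by
  have h_succ (i : Fin N) : f i.succ = 1 + (-1) ^ (i : ℕ) := by
    rw [hf _ i.succ_ne_zero, Fin.val_succ, add_assoc, pow_add, one_add_one_eq_two,
      neg_one_sq, mul_one]
  calc ∑ l, f l ^ 2
      = 1 + ∑ i ∈ Finset.range N, (1 + (-1 : R) ^ i) ^ 2 := by
        simp only [Fin.sum_univ_succ, hf0, one_pow, h_succ, Finset.sum_range]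
    _ = if Even N then 2 * (N : R) + 1 else 2 * N + 3 := by
        rw [sum_range_sq_one_add_neg_one_pow]
        split_ifs <;> ring

theorem stmt14 (N n : ℕ) (hN : 1 ≤ N) (hn : 2 ≤ n)
    (f : Fin (N + 1) → ℝ) (hf0 : f 0 = 1)
    (hf : ∀ l : Fin (N + 1), l ≠ 0 → f l = 1 + (-1) ^ ((l : ℕ) + 1)) :
    (∑ l, f l ^ 2) = (if Even N then 2 * (N : ℝ) + 1 else 2 * (N : ℝ) + 3) ∧
    (∀ (μ : ℝ) (v : Fin (n - 1) → ℝ), v ≠ 0 →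
        (Cs N n f * (Cs N n f)ᵀ).mulVec v = μ • v →
        2 * (N : ℝ) ≤ μ ∧ μ ≤ 2 * (N : ℝ) + 6) := by
  have h_norm := sum_sq_of_eq_one_add_neg_one_pow hf0 hf
  refine ⟨h_norm, fun μ v hv h_eig => ?_⟩
  have h_dot : f ⬝ᵥ f = ∑ l, f l ^ 2 := by simp only [dotProduct, sq]
  have h_ball : |μ - (∑ l, f l ^ 2 + 1)| ≤ 2 := by
    simpa only [h_dot, hf0, abs_one, mul_one] using
      abs_sub_le_of_Cs_mul_transpose_mulVec_eq_smul hv h_eig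
  obtain ⟨h_lower, h_upper⟩ := abs_le.mp h_ball
  rw [h_norm] at h_lower h_upper
  split_ifs at h_lower h_upper <;> constructor <;> linarith
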